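/- The automorphism group of the Hermitian unital design of order 4 — the 2-(65,5,1) design whose points are the 65 points of H = { [x : y : z] ∈ PG(2,16) : x⁵ + y⁵ + z⁵ = 0 } and whose blocks are the intersections H ∩ ℓ over lines ℓ of PG(2,16) meeting H in 5 points — has order exactly 249600. -/

import Mathlib

noncomputable section

/-- The field `GF(16)` of 16 elements. -/
abbrev K16 := GaloisField 2 4

/-- The 3-dimensional vector space over `GF(16)`. -/
abbrev V16 := Fin 3 → K16

/-- The point set of the Desarguesian projective plane `PG(2,16)`:
1-dimensional subspaces of the 3-dimensional vector space over `GF(16)`. -/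
abbrev PG216 := Projectivization K16 V16

/-- The Hermitian set `H = { [x : y : z] ∈ PG(2,16) : x⁵ + y⁵ + z⁵ = 0 }`.
(The defining condition is invariant under scalar multiplication, so it may be
evaluated on the chosen representative of each point.) -/
def HermitianSet : Set PG216 :=
  {p | p.rep 0 ^ 5 + p.rep 1 ^ 5 + p.rep 2 ^ 5 = 0}
/-- The blocks of the Hermitian unital design: intersections of the Hermitian set with
lines of `PG(2,16)` meeting it in 5 points, viewed as subsets of the Hermitian set. -/
def hermitianBlocks : Set (Set ↥HermitianSet) :=
  {b | ∃ W : Submodule K16 V16, Module.finrank K16 W = 2 ∧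
        b = {x : ↥HermitianSet | x.1.submodule ≤ W} ∧ b.ncard = 5}

/-!
Over `K = GF(16)` with conjugation `x̄ = x ^ 4`, a change of coordinates turns the curve into
`x x̄ = y z̄ + ȳ z`: a point `∞` together with the affine points `(x, y)` with `x x̄ = y + ȳ`.
Collineations permute the 65 points transitively, those fixing `∞` permute the 64 affine points
transitively, and those also fixing `(0, 0)` permute the 60 affine points off the line `x = 0`
transitively. So the order is `65 * 64 * 60` as soon as the identity is the only automorphism
fixing `∞`, `(0, 0)` and a point `(1, w)`.

An automorphism fixing `∞` permutes the vertical lines, which gives a permutation `π` of `K`. The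
blocks missing `∞` project onto the Hermitian circles `{x | N(x - a) = N(r - a)}`, where
`N(x) = x x̄`, so `π` maps circles to circles. The centre of a circle `C` is the only point off `C`
through which no circle is tangent to `C`, so `π` respects centres. As there are only three nonzero
norms, `π` is an isometry for `N` up to the Frobenius map once it fixes `0` and `1`, and an isometry
fixing `0` and `1` is the identity or the conjugation. Undoing this field automorphism reduces to
`π = 1`; then every block missing `∞` goes to one of the same slope, and a second fixed point
propagates to all points.
-/

section Permutations

variable {X Y : Type*}

/-- The permutations of `X` that map every member of `B` onto a member of `B` and whose inverses
do so too; for the point set `X` of a finite design with block set `B`, its automorphism group. -/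
def designAut (B : Set (Set X)) : Subgroup (Equiv.Perm X) where
  carrier := {σ | ∀ b, σ '' b ∈ B ↔ b ∈ B}
  one_mem' := by simp
  mul_mem' := by
    intro σ τ hσ hτ b
    rw [Equiv.Perm.coe_mul, Set.image_comp, hσ, hτ]
  inv_mem' := by
    intro σ hσ b
    rw [← hσ, ← Set.image_comp, ← Equiv.Perm.coe_mul, mul_inv_cancel, Equiv.Perm.coe_one,
      Set.image_id]

variable {B : Set (Set X)} {C : Set (Set Y)}

lemma mem_designAut_of_finite [Finite X] {σ : Equiv.Perm X}
    (h : ∀ b ∈ B, σ '' b ∈ B) : σ ∈ designAut B := by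
  have hB : (σ '' ·) '' B = B := Set.eq_of_subset_of_ncard_le (Set.image_subset_iff.2 h)
    (Set.ncard_image_of_injective _ (Set.image_injective.2 σ.injective)).ge
  intro b
  nth_rewrite 1 [← hB]
  exact (Set.image_injective.2 σ.injective).mem_set_image

lemma card_designAut_congr (e : X ≃ Y) (h : ∀ b, e '' b ∈ C ↔ b ∈ B) :
    Nat.card (designAut B) = Nat.card (designAut C) := by
  refine Nat.card_congr (e.permCongr.subtypeEquiv fun σ ↦ ?_)
  have image_comm (b : Set X) : e.permCongr σ '' (e '' b) = e '' (σ '' b) := by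
    simp [Set.image_image]
  refine (e.surjective.image_surjective.forall.trans (forall_congr' fun b ↦ ?_)).symm
  rw [image_comm, h, h]

lemma card_forall_image_mem [Finite X] :
    Nat.card {σ : Equiv.Perm X // ∀ b ∈ B, σ '' b ∈ B} = Nat.card (designAut B) :=
  Nat.card_congr <| Equiv.subtypeEquivRight fun _ ↦
    ⟨mem_designAut_of_finite, fun hσ b hb ↦ (hσ b).2 hb⟩

lemma exists_eq_optionCongr {σ : Equiv.Perm (Option X)} (hσ : σ none = none) :
    ∃ τ : Equiv.Perm X, Equiv.optionCongr τ = σ := by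
  refine ⟨Equiv.removeNone σ, Equiv.ext fun p ↦ ?_⟩
  rcases p with _ | p
  · simp [hσ]
  · refine Equiv.removeNone_some σ (Option.ne_none_iff_exists'.1 fun h ↦ ?_)
    exact Option.some_ne_none p (σ.injective (h.trans hσ.symm))

lemma none_mem_optionCongr_image {τ : Equiv.Perm X} {b : Set (Option X)} :
    none ∈ Equiv.optionCongr τ '' b ↔ none ∈ b :=
  (Equiv.optionCongr τ).injective.mem_set_image (a := none)

lemma exists_perm_of_fiberwise {f : X → Y} (hf : f.Surjective) {τ : Equiv.Perm X}
    (h : ∀ p q, f (τ p) = f (τ q) ↔ f p = f q) : ∃ π : Equiv.Perm Y, ∀ p, f (τ p) = π (f p) := by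
  have apply_surjInv (p) : f (τ (Function.surjInv hf (f p))) = f (τ p) :=
    (h _ _).2 (Function.surjInv_eq hf _)
  refine ⟨Equiv.ofBijective (fun y ↦ f (τ (Function.surjInv hf y))) ⟨fun y z hyz ↦ ?_, fun y ↦ ?_⟩,
    fun p ↦ (apply_surjInv p).symm⟩
  · simpa [Function.surjInv_eq] using (h _ _).1 hyz
  · obtain ⟨p, rfl⟩ := hf y
    exact ⟨f (τ.symm p), by simp [apply_surjInv]⟩

lemma card_eq_ncard_orbit_mul_card_inf_stabilizer {G : Type*} [Group G] [MulAction G X]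
    (H : Subgroup G) (a : X) : Nat.card H =
      (MulAction.orbit H a).ncard * Nat.card ↥(H ⊓ MulAction.stabilizer G a) := by
  have hstab : MulAction.stabilizer H a = (MulAction.stabilizer G a).subgroupOf H := rfl
  rw [← MulAction.index_stabilizer, hstab, ← Subgroup.card_mul_index
    ((MulAction.stabilizer G a).subgroupOf H), mul_comm, ← Subgroup.inf_subgroupOf_left,
    Nat.card_congr (Subgroup.subgroupOfEquivOfLe inf_le_left).toEquiv]

end Permutations

section NormTrace

variable {K : Type*} [CommRing K] [StarRing K]

/-- The norm `x x̄` to the fixed ring of the conjugation `star`. -/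
def relNorm (x : K) : K := x * star x

/-- The trace `x + x̄` to the fixed ring of the conjugation `star`. -/
def relTrace (x : K) : K := x + star x

@[simp] lemma relNorm_zero : relNorm (0 : K) = 0 := by simp [relNorm]

@[simp] lemma relNorm_one : relNorm (1 : K) = 1 := by simp [relNorm]

@[simp] lemma relTrace_zero : relTrace (0 : K) = 0 := by simp [relTrace]

lemma relNorm_mul (x y : K) : relNorm (x * y) = relNorm x * relNorm y := by
  simp only [relNorm, star_mul']; ring

lemma relNorm_sq (x : K) : relNorm (x ^ 2) = relNorm x ^ 2 := by
  rw [sq, relNorm_mul, sq]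

@[simp] lemma relNorm_star (x : K) : relNorm (star x) = relNorm x := by
  simp only [relNorm, star_star]; ring

@[simp] lemma star_relNorm (x : K) : star (relNorm x) = relNorm x := by
  simp only [relNorm, star_mul', star_star]; ring

lemma relTrace_add (x y : K) : relTrace (x + y) = relTrace x + relTrace y := by
  simp only [relTrace, star_add]; ring

@[simp] lemma relTrace_star (x : K) : relTrace (star x) = relTrace x := by
  simp only [relTrace, star_star]; ring

@[simp] lemma star_relTrace (x : K) : star (relTrace x) = relTrace x := by
  simp only [relTrace, star_add, star_star]; ring

lemma relTrace_mul_of_star_eq {e : K} (he : star e = e) (x : K) :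
    relTrace (e * x) = e * relTrace x := by
  simp only [relTrace, star_mul', he]; ring

lemma relNorm_sub (x y : K) :
    relNorm (x - y) = relNorm x + relNorm y - relTrace (x * star y) := by
  simp only [relNorm, relTrace, star_sub, star_mul', star_star]; ring

lemma relNorm_sub_mul_self {s : K} (hs : star s = s) (x p : K) :
    relNorm (x - s * p) = relNorm x + s ^ 2 * relNorm p - s * relTrace (x * star p) := by
  simp only [relNorm, relTrace, star_sub, star_mul', star_star, hs]; ring

lemma relNorm_sub_comm (x y : K) : relNorm (x - y) = relNorm (y - x) := by
  simp only [relNorm, star_sub]; ring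

lemma eq_or_eq_star_of_relNorm_of_relTrace [NoZeroDivisors K] {x y : K}
    (hN : relNorm x = relNorm y) (hT : relTrace x = relTrace y) : x = y ∨ x = star y := by
  have : (x - y) * (x - star y) = 0 := by
    simp only [relNorm, relTrace] at hN hT
    linear_combination x * hT - hN
  simpa [sub_eq_zero] using this

lemma relNorm_eq_zero [NoZeroDivisors K] {x : K} : relNorm x = 0 ↔ x = 0 := by
  simp [relNorm]

theorem eq_id_or_eq_star_of_isometry [NoZeroDivisors K] {π : K → K} (h0 : π 0 = 0) (h1 : π 1 = 1)
    (h : ∀ x y, relNorm (π x - π y) = relNorm (x - y)) :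
    (∀ x, π x = x) ∨ ∀ x, π x = star x := by
  have norm_apply (x) : relNorm (π x) = relNorm x := by simpa [h0] using h x 0
  have trace_apply (x y) : relTrace (π x * star (π y)) = relTrace (x * star y) := by
    have := h x y
    rw [relNorm_sub, relNorm_sub, norm_apply, norm_apply] at this
    linear_combination -this
  have pointwise (x) : π x = x ∨ π x = star x :=
    eq_or_eq_star_of_relNorm_of_relTrace (norm_apply x) (by simpa [h1] using trace_apply x 1)
  by_contra! hne
  obtain ⟨⟨y, hy⟩, x, hx⟩ := hne
  have hπx : π x = x := (pointwise x).resolve_right hx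
  have hπy : π y = star y := (pointwise y).resolve_left hy
  have : (x - star x) * (y - star y) = 0 := by
    have := trace_apply x y
    simp only [relTrace, hπx, hπy, star_mul', star_star] at this
    linear_combination this
  rcases mul_eq_zero.1 this with h | h
  · exact hx (hπx.trans (sub_eq_zero.1 h))
  · exact hy (hπy.trans (sub_eq_zero.1 h).symm)

end NormTrace

section Circles

variable {K : Type*} [Field K] [StarRing K]

/-- The Hermitian circle through `r` centred at `a`. -/
def circle (a r : K) : Set K := {x | relNorm (x - a) = relNorm (r - a)}

variable (K) in
/-- The nondegenerate Hermitian circles. -/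
def circles : Set (Set K) := {C | ∃ a r, r ≠ a ∧ C = circle a r}

lemma mem_circle {a r x : K} : x ∈ circle a r ↔ relNorm (x - a) = relNorm (r - a) := Iff.rfl

lemma circle_mem_circles {a r : K} (h : r ≠ a) : circle a r ∈ circles K := ⟨a, r, h, rfl⟩

variable [CharP K 2]

lemma relTrace_eq_zero_iff {x : K} : relTrace x = 0 ↔ star x = x := by
  rw [relTrace, CharTwo.add_eq_zero, eq_comm]

-- The reflection `x ↦ x̄ b / b̄` in the line of centres `0`, `b` maps each of the two circles to
-- itself and moves their common points.
lemma exists_ne_relNorm_eq {x b : K} (hx : x ≠ 0) (hb : relNorm (x - b) = relNorm b) :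
    ∃ y ≠ x, relNorm y = relNorm x ∧ relNorm (y - b) = relNorm b := by
  have hb0 : star b ≠ 0 := fun h ↦ hx <| by simpa [star_eq_zero.1 h, relNorm_eq_zero] using hb
  have hyb : star x * b / star b * star b = star (x * star b) := by
    rw [div_mul_cancel₀ _ hb0, star_mul', star_star]
  have hN : relNorm (star x * b / star b) = relNorm x :=
    mul_right_cancel₀ (relNorm_eq_zero.not.2 hb0) <| by
      rw [← relNorm_mul, hyb, relNorm_star, relNorm_mul]
  refine ⟨star x * b / star b, fun h ↦ hx ?_, hN, ?_⟩
  · rw [h, eq_comm, ← relTrace_eq_zero_iff] at hyb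
    rw [relNorm_sub, hyb] at hb
    exact relNorm_eq_zero.1 (by linear_combination hb)
  · rw [← hb, relNorm_sub, relNorm_sub, hN, hyb, relTrace_star]

lemma exists_relNorm_eq_relTrace_ne_zero {w : K} (hw : relTrace w = 1) {r x : K} (hr : r ≠ 0)
    (hx : x ≠ 0) : ∃ p, relNorm p = relNorm r ∧ relTrace (p * star x) ≠ 0 := by
  by_cases h : relTrace (r * star x) = 0
  · have hw0 : star w ≠ 0 := fun h ↦ by simp [star_eq_zero.1 h] at hw
    refine ⟨r * (w / star w), ?_, fun hp ↦ ?_⟩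
    · refine mul_right_cancel₀ (relNorm_eq_zero.not.2 hw0) ?_
      rw [← relNorm_mul, mul_assoc, div_mul_cancel₀ _ hw0, relNorm_mul, relNorm_star]
    · rw [mul_right_comm, relTrace_mul_of_star_eq (relTrace_eq_zero_iff.1 h)] at hp
      have hww : w / star w = star (w / star w) := by
        refine (relTrace_eq_zero_iff.1 ((mul_eq_zero.1 hp).resolve_left ?_)).symm
        exact mul_ne_zero hr (star_ne_zero.2 hx)
      rw [star_div₀, star_star, div_eq_div_iff hw0 (star_ne_zero.1 hw0)] at hww
      have : relTrace w * relTrace w = 0 := by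
        rw [relTrace]
        linear_combination (w * star w + star w * star w) * CharTwo.two_eq_zero (R := K) + hww
      simp [hw] at this
  · exact ⟨r, rfl, h⟩

lemma eq_of_relNorm_eq_of_relTrace_eq_zero {y p : K} (hp : p ≠ 0) (hN : relNorm y = relNorm p)
    (hT : relTrace (y * star p) = 0) : y = p := by
  have hsq : (y * star p) ^ 2 = relNorm p ^ 2 := by
    nth_rewrite 1 [sq, ← relTrace_eq_zero_iff.1 hT]
    rw [mul_comm, ← relNorm, relNorm_mul, relNorm_star, hN, sq]
  exact mul_right_cancel₀ (star_ne_zero.2 hp) (CharTwo.sq_injective hsq)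

-- The centre is the point of the line `0 p` equidistant from `p` and `x`; two circles whose
-- centres are collinear with a common point are tangent there.
lemma exists_tangent_circle {w : K} (hw : relTrace w = 1) {r x : K} (hr : r ≠ 0) (hx : x ≠ 0)
    (hxr : relNorm x ≠ relNorm r) :
    ∃ b p, p ≠ b ∧ relNorm p = relNorm r ∧ relNorm (x - b) = relNorm (p - b) ∧
      ∀ y, relNorm y = relNorm r → relNorm (y - b) = relNorm (p - b) → y = p := by
  obtain ⟨p, hpr, hpx⟩ := exists_relNorm_eq_relTrace_ne_zero hw hr hx
  have hp : p ≠ 0 := fun h ↦ hpx (by simp [h])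
  obtain ⟨s, hs, hsT⟩ : ∃ s, star s = s ∧ s * relTrace (p * star x) = relNorm p - relNorm x :=
    ⟨_, by simp [star_div₀], div_mul_cancel₀ (relNorm p - relNorm x) hpx⟩
  have hs0 : s ≠ 0 := by
    rintro rfl
    exact hxr (by linear_combination hpr + hsT)
  have hTp : relTrace (p * star p) = 0 := relTrace_eq_zero_iff.2 (star_relNorm p)
  have hTx : relTrace (x * star p) = relTrace (p * star x) := by
    rw [← relTrace_star (p * star x), star_mul', star_star, mul_comm]
  refine ⟨s * p, p, fun h ↦ ?_, hpr, ?_, fun y hy hyb ↦ ?_⟩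
  · obtain rfl : s = 1 := mul_right_cancel₀ hp (by rw [← h, one_mul])
    have : relNorm (p - x) = 0 := by
      rw [relNorm_sub]
      linear_combination relNorm x * CharTwo.two_eq_zero (R := K) - hsT
    rw [← sub_eq_zero.1 (relNorm_eq_zero.1 this)] at hxr
    exact hxr hpr
  · rw [relNorm_sub_mul_self hs, relNorm_sub_mul_self hs, hTp, hTx]
    linear_combination (relNorm x - relNorm p) * CharTwo.two_eq_zero (R := K) - hsT
  · rw [relNorm_sub_mul_self hs, relNorm_sub_mul_self hs, hTp, hy, hpr] at hyb
    have : s * relTrace (y * star p) = 0 := by linear_combination -hyb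
    exact eq_of_relNorm_eq_of_relTrace_eq_zero hp (hy.trans hpr.symm)
      ((mul_eq_zero.1 this).resolve_left hs0)

theorem eq_center_iff {w : K} (hw : relTrace w = 1) {a r x : K} (hr : r ≠ a) :
    x = a ↔ x ∉ circle a r ∧ ∀ D ∈ circles K, x ∈ D → ∀ p, D ∩ circle a r ≠ {p} := by
  have hra : r - a ≠ 0 := sub_ne_zero.2 hr
  constructor
  · rintro rfl
    refine ⟨fun h ↦ hra ?_, ?_⟩
    · rw [mem_circle, sub_self, relNorm_zero, eq_comm, relNorm_eq_zero] at h
      exact h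
    · rintro _ ⟨b, s, -, rfl⟩ hxb p hp
      have hpD : p ∈ circle b s ∩ circle x r := hp ▸ Set.mem_singleton p
      obtain ⟨y, hy, hyr, hyb⟩ := exists_ne_relNorm_eq (x := p - x) (b := b - x)
        (fun h ↦ hra <| by simpa [mem_circle, h, relNorm_eq_zero, eq_comm] using hpD.2) (by
          rw [sub_sub_sub_cancel_right, hpD.1, ← hxb, relNorm_sub_comm])
      have : y + x ∈ circle b s ∩ circle x r := by
        constructor
        · rw [mem_circle, ← hxb, relNorm_sub_comm x, ← hyb]; congr 1; ring
        · rw [mem_circle, add_sub_cancel_right, hyr, hpD.2]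
      rw [hp, Set.mem_singleton_iff] at this
      exact hy (eq_sub_of_add_eq this)
  · rintro ⟨hx, hD⟩
    by_contra hxa
    obtain ⟨b, p, hpb, hpr, hxb, hp⟩ := exists_tangent_circle hw hra (sub_ne_zero.2 hxa) hx
    refine hD (circle (b + a) (p + a)) (circle_mem_circles (by simpa using hpb)) ?_ (p + a) ?_
    · rw [mem_circle, add_sub_add_right_eq_sub, ← hxb]; congr 1; ring
    · refine Set.eq_singleton_iff_unique_mem.2 ⟨⟨rfl, ?_⟩, fun y hy ↦ ?_⟩
      · rw [mem_circle, add_sub_cancel_right, hpr]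
      · refine eq_add_of_sub_eq (hp _ hy.2 ?_)
        have := hy.1
        rw [mem_circle, add_sub_add_right_eq_sub] at this
        rw [← this]; congr 1; ring

lemma circle_center_injective {w : K} (hw : relTrace w = 1) {a b r s : K} (hr : r ≠ a) (hs : s ≠ b)
    (h : circle a r = circle b s) : a = b := by
  rw [eq_center_iff hw hs, ← h, ← eq_center_iff hw hr]

lemma image_circle {w : K} (hw : relTrace w = 1) {π : Equiv.Perm K}
    (hπ : π ∈ designAut (circles K)) {a r : K} (hr : r ≠ a) :
    π '' circle a r = circle (π a) (π r) := by
  obtain ⟨b, s, hs, h⟩ := (hπ _).2 (circle_mem_circles hr)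
  obtain ⟨c, rfl⟩ := π.surjective b
  have hc : c = a := by
    obtain ⟨hcC, hcD⟩ := (eq_center_iff hw hs).1 rfl
    rw [← h] at hcC hcD
    refine (eq_center_iff hw hr).2
      ⟨fun hc ↦ hcC (Set.mem_image_of_mem π hc), fun D hD hc p hp ↦ ?_⟩
    refine hcD (π '' D) ((hπ D).2 hD) (Set.mem_image_of_mem π hc) (π p) ?_
    rw [← Set.image_inter π.injective, hp, Set.image_singleton]
  subst hc
  have hrs : π r ∈ circle (π c) s := h ▸ Set.mem_image_of_mem π rfl
  rw [h]
  ext x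
  rw [mem_circle, mem_circle, mem_circle.1 hrs]

/-- The map `π` sends points equidistant from a point `a`, with respect to the distance
`relNorm (x - a)`, to points equidistant from the image of `a`, and conversely. -/
def PreservesEquidistance {K : Type*} [CommRing K] [StarRing K] (π : K → K) : Prop :=
  ∀ a x y, relNorm (π x - π a) = relNorm (π y - π a) ↔ relNorm (x - a) = relNorm (y - a)

theorem preservesEquidistance_of_mem_designAut {w : K} (hw : relTrace w = 1) {π : Equiv.Perm K}
    (hπ : π ∈ designAut (circles K)) : PreservesEquidistance π := by
  intro a x y
  by_cases hy : y = a
  · simp [hy, relNorm_eq_zero, sub_eq_zero]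
  · rw [← mem_circle, ← image_circle hw hπ hy, π.injective.mem_set_image, mem_circle]

end Circles

lemma add_add_eq_zero_of_pow_three {K : Type*} [Field K] {u v t : K} (hu : u ^ 3 = 1)
    (hv : v ^ 3 = 1) (ht : t ^ 3 = 1) (huv : u ≠ v) (hut : u ≠ t) (hvt : v ≠ t) :
    u + v + t = 0 := by
  have quad {x y : K} (hx : x ^ 3 = 1) (hy : y ^ 3 = 1) (hxy : x ≠ y) :
      x ^ 2 + x * y + y ^ 2 = 0 :=
    (mul_eq_zero.1 (by linear_combination hx - hy)).resolve_left (sub_ne_zero.2 hxy)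
  exact (mul_eq_zero.1 (by linear_combination quad hu hv huv - quad hu ht hut)).resolve_left
    (sub_ne_zero.2 hvt)

section GF16

variable {K : Type*} [Field K] [StarRing K]

/-- A ring automorphism commutes with the conjugation `x ↦ x ^ 4`, so it is a `⋆`-automorphism. -/
def starRingEquivOfStarEqPow (hstar : ∀ x : K, star x = x ^ 4) (φ : K ≃+* K) : K ≃⋆+* K :=
  ⟨φ, fun x ↦ by simp [hstar]⟩

@[simp] lemma starRingEquivOfStarEqPow_apply (hstar : ∀ x : K, star x = x ^ 4) (φ : K ≃+* K)
    (x : K) : starRingEquivOfStarEqPow hstar φ x = φ x := rfl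

lemma relNorm_eq_pow_five (hstar : ∀ x : K, star x = x ^ 4) (x : K) : relNorm x = x ^ 5 := by
  rw [relNorm, hstar]; ring

lemma relNorm_pow_three (hstar : ∀ x : K, star x = x ^ 4) {x : K} (hx : x ≠ 0) :
    relNorm x ^ 3 = 1 := by
  have h : star (star x) = x := star_star x
  rw [hstar, hstar] at h
  refine mul_left_cancel₀ hx ?_
  rw [relNorm_eq_pow_five hstar]
  linear_combination h

/- The nonzero elements have only three norms, so a bijection on norms is determined by two. -/
lemma relNorm_eq_of_two_points (hstar : ∀ x : K, star x = x ^ 4) {π : K → K} {p q a : K}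
    (h : ∀ x y, relNorm (π x - π a) = relNorm (π y - π a) ↔ relNorm (x - a) = relNorm (y - a))
    (hp : p ≠ a) (hq : q ≠ a)
    (hpq : relNorm (p - a) ≠ relNorm (q - a)) (hπp : relNorm (π p - π a) = relNorm (p - a))
    (hπq : relNorm (π q - π a) = relNorm (q - a)) (x : K) :
    relNorm (π x - π a) = relNorm (x - a) := by
  have eq_iff {y : K} (hy : relNorm (π y - π a) = relNorm (y - a)) :
      relNorm (π x - π a) = relNorm (y - a) ↔ relNorm (x - a) = relNorm (y - a) := by
    rw [← hy, h, hy]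
  by_cases hx : x = a
  · simp [hx]
  have hπx : π x - π a ≠ 0 := fun hπx ↦ hx <| sub_eq_zero.1 <| relNorm_eq_zero.1 <| by
    simpa using (h x a).1 (by simp [hπx])
  by_cases hxp : relNorm (x - a) = relNorm (p - a)
  · exact ((eq_iff hπp).2 hxp).trans hxp.symm
  by_cases hxq : relNorm (x - a) = relNorm (q - a)
  · exact ((eq_iff hπq).2 hxq).trans hxq.symm
  have hp3 := relNorm_pow_three hstar (sub_ne_zero.2 hp)
  have hq3 := relNorm_pow_three hstar (sub_ne_zero.2 hq)
  have third := add_add_eq_zero_of_pow_three hp3 hq3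
    (relNorm_pow_three hstar (sub_ne_zero.2 hx)) hpq (Ne.symm hxp) (Ne.symm hxq)
  have third_image := add_add_eq_zero_of_pow_three hp3 hq3 (relNorm_pow_three hstar hπx) hpq
    (mt (eq_iff hπp).1 hxp ∘ Eq.symm) (mt (eq_iff hπq).1 hxq ∘ Eq.symm)
  linear_combination third_image - third

variable [CharP K 2]

lemma star_eq_add_one_of_relTrace_eq_one {w : K} (hw : relTrace w = 1) : star w = w + 1 := by
  rw [← hw, relTrace, CharTwo.add_cancel_left]

lemma relNorm_ne_one_of_relTrace_eq_one (hstar : ∀ x : K, star x = x ^ 4) {w : K}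
    (hw : relTrace w = 1) : relNorm w ≠ 1 := by
  intro h
  have hw4 := star_eq_add_one_of_relTrace_eq_one hw
  rw [relNorm, hw4] at h
  rw [hstar] at hw4
  have : (1 : K) = 0 := by
    linear_combination (w ^ 2 - w + 2) * h - hw4 - (2 * w - 1) * CharTwo.two_eq_zero (R := K)
  exact one_ne_zero this

lemma relNorm_sub_eq_of_equidistant (hstar : ∀ x : K, star x = x ^ 4) {w : K} (hw : relTrace w = 1)
    {π : K → K} (h : PreservesEquidistance π) (h0 : π 0 = 0) (h1 : π 1 = 1)
    (hπw : relNorm (π w) = relNorm w) (x a : K) :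
    relNorm (π x - π a) = relNorm (x - a) := by
  have hw0 : w ≠ 0 := fun h ↦ by simp [h] at hw
  have hNw := relNorm_ne_one_of_relTrace_eq_one hstar hw
  have norm_apply (y) : relNorm (π y) = relNorm y := by
    simpa [h0] using relNorm_eq_of_two_points hstar (h 0) one_ne_zero hw0
      (by simpa using hNw.symm) (by simp [h0, h1]) (by simpa [h0] using hπw) y
  rcases eq_or_ne a 0 with rfl | ha
  · simp [h0, norm_apply]
  have hwa : relNorm (a * w - a) = relNorm (a * w) := by
    rw [CharTwo.sub_eq_add, ← mul_add_one, ← star_eq_add_one_of_relTrace_eq_one hw, relNorm_mul,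
      relNorm_star, relNorm_mul]
  have hNa : relNorm (0 - a) = relNorm a := by rw [relNorm_sub_comm, sub_zero]
  refine relNorm_eq_of_two_points hstar (h a) ha.symm (q := a * w) ?_ ?_ ?_ ?_ x
  · intro haw
    rw [haw, sub_self, relNorm_zero, eq_comm, relNorm_eq_zero] at hwa
    exact ha hwa
  · rw [hwa, hNa, relNorm_mul]
    exact fun haw ↦ hNw (mul_left_cancel₀ (relNorm_eq_zero.not.2 ha) (by rw [← haw, mul_one]))
  · rw [h0, hNa, relNorm_sub_comm, sub_zero, norm_apply]
  · have := (h (a * w) a 0).2 (by rw [relNorm_sub_comm, hwa, relNorm_sub_comm, sub_zero])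
    rw [relNorm_sub_comm, this, h0, relNorm_sub_comm, sub_zero, norm_apply, hwa]

lemma exists_starRingEquiv_of_relNorm_apply_eq (hstar : ∀ x : K, star x = x ^ 4) {w : K}
    (hw : relTrace w = 1) {π : K → K} (h : PreservesEquidistance π) (h0 : π 0 = 0) (h1 : π 1 = 1)
    (hπw : relNorm (π w) = relNorm w) : ∃ φ : K ≃⋆+* K, ∀ x, π x = φ x := by
  rcases eq_id_or_eq_star_of_isometry h0 h1
    (relNorm_sub_eq_of_equidistant hstar hw h h0 h1 hπw) with hπ | hπ
  · exact ⟨starRingEquivOfStarEqPow hstar (RingEquiv.refl K), hπ⟩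
  · exact ⟨starRingEquivOfStarEqPow hstar starRingAut, hπ⟩

lemma PreservesEquidistance.sq {π : K → K} (h : PreservesEquidistance π) :
    PreservesEquidistance fun x ↦ π x ^ 2 := fun a x y ↦ by
  have relNorm_sq_sub_sq (u v : K) : relNorm (u ^ 2 - v ^ 2) = relNorm (u - v) ^ 2 := by
    rw [CharTwo.sub_eq_add, ← CharTwo.add_sq, relNorm_sq, CharTwo.sub_eq_add]
  simp only [relNorm_sq_sub_sq, CharTwo.sq_inj]
  exact h a x y

-- If `π` moves the norm of `w`, it swaps the two norms other than `0` and `1`, as squaring does.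
lemma relNorm_apply_sq_eq (hstar : ∀ x : K, star x = x ^ 4) {w : K} (hw : relTrace w = 1)
    {π : K → K} (h : PreservesEquidistance π) (h0 : π 0 = 0) (h1 : π 1 = 1)
    (hπw : relNorm (π w) ≠ relNorm w) : relNorm (π w ^ 2) = relNorm w := by
  have hNw := relNorm_ne_one_of_relTrace_eq_one hstar hw
  have hw0 : w ≠ 0 := fun h ↦ by simp [h] at hw
  have hπNw : relNorm (π w) ≠ 1 := by
    have := (h 0 w 1).not.2 (by simpa using hNw)
    simpa [h0, h1] using this
  have hπw0 : π w ≠ 0 := fun hπ ↦ hw0 <| by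
    simpa [h0, hπ, relNorm_eq_zero, eq_comm] using (h 0 0 w)
  have cubed := relNorm_pow_three hstar hπw0
  have third := add_add_eq_zero_of_pow_three (relNorm_pow_three hstar hw0) cubed (one_pow 3)
    hπw.symm hNw hπNw
  have : (relNorm (π w) - 1) * (relNorm (π w) ^ 2 - relNorm w) = 0 := by
    linear_combination cubed - (relNorm (π w) - 1) * third
  rw [relNorm_sq]
  exact sub_eq_zero.1 ((mul_eq_zero.1 this).resolve_left (sub_ne_zero.2 hπNw))

theorem exists_starRingEquiv_of_equidistant (hstar : ∀ x : K, star x = x ^ 4) {w : K}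
    (hw : relTrace w = 1) [Finite K] {π : K → K} (h : PreservesEquidistance π)
    (h0 : π 0 = 0) (h1 : π 1 = 1) :
    ∃ φ : K ≃⋆+* K, ∀ x, π x = φ x := by
  by_cases hπw : relNorm (π w) = relNorm w
  · exact exists_starRingEquiv_of_relNorm_apply_eq hstar hw h h0 h1 hπw
  obtain ⟨φ, hφ⟩ := exists_starRingEquiv_of_relNorm_apply_eq hstar hw h.sq (by simp [h0])
    (by simp [h1]) (relNorm_apply_sq_eq hstar hw h h0 h1 hπw)
  refine ⟨starRingEquivOfStarEqPow hstar (φ.toRingEquiv.trans (frobeniusEquiv K 2).symm),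
    fun x ↦ ?_⟩
  rw [starRingEquivOfStarEqPow_apply, RingEquiv.trans_apply, RingEquiv.eq_symm_apply,
    frobeniusEquiv_apply, frobenius_def]
  exact hφ x

end GF16

section FixedField

variable {K : Type*} [Field K] [StarRing K] [CharP K 2]

lemma sub_mul_relTrace_mem_selfAdjoint {w : K} (hw : relTrace w = 1) (x : K) :
    x - w * relTrace x ∈ selfAdjoint K := by
  rw [selfAdjoint.mem_iff, star_sub, star_mul', star_relTrace,
    star_eq_add_one_of_relTrace_eq_one hw, ← sub_eq_zero, relTrace]
  linear_combination (-x) * CharTwo.two_eq_zero (R := K)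

lemma mem_selfAdjoint_iff (hstar : ∀ x : K, star x = x ^ 4) {w : K} (hw : relTrace w = 1) {e : K} :
    e ∈ selfAdjoint K ↔ e = 0 ∨ e = 1 ∨ e = relNorm w ∨ e = relNorm w + 1 := by
  rw [selfAdjoint.mem_iff]
  constructor
  · intro he
    by_contra! hne
    obtain ⟨he0, he1, heu, heu1⟩ := hne
    have he3 : e ^ 3 = 1 := mul_left_cancel₀ he0 (by rw [hstar] at he; linear_combination he)
    have hw0 : w ≠ 0 := fun h ↦ by simp [h] at hw
    have := add_add_eq_zero_of_pow_three (relNorm_pow_three hstar hw0) (one_pow 3) he3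
      (relNorm_ne_one_of_relTrace_eq_one hstar hw) heu.symm he1.symm
    exact heu1 (CharTwo.add_eq_zero.1 this).symm
  · rintro (rfl | rfl | rfl | rfl) <;> simp

lemma card_selfAdjoint (hstar : ∀ x : K, star x = x ^ 4) {w : K} (hw : relTrace w = 1) :
    Nat.card (selfAdjoint K) = 4 := by
  classical
  have hset : (selfAdjoint K : Set K) = ({0, 1, relNorm w, relNorm w + 1} : Finset K) := by
    ext e
    simp [mem_selfAdjoint_iff hstar hw]
  have hw0 : w ≠ 0 := fun h ↦ by simp [h] at hw
  have hu0 : relNorm w ≠ 0 := relNorm_eq_zero.not.2 hw0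
  have hu1 := relNorm_ne_one_of_relTrace_eq_one hstar hw
  have hu1' : relNorm w + 1 ≠ 0 := CharTwo.add_eq_zero.not.2 hu1
  rw [← SetLike.coe_sort_coe, hset, Nat.card_coe_set_eq, Set.ncard_coe_finset,
    Finset.card_insert_of_notMem, Finset.card_insert_of_notMem, Finset.card_insert_of_notMem,
    Finset.card_singleton] <;> simp [hu0, hu0.symm, hu1.symm, hu1'.symm]

lemma starRingEquiv_apply_eq_self (hstar : ∀ x : K, star x = x ^ 4) {w : K} (hw : relTrace w = 1)
    {φ : K ≃⋆+* K} (hφ : φ w = w) (x : K) : φ x = x := by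
  have fixed {e : K} (he : e ∈ selfAdjoint K) : φ e = e := by
    rcases (mem_selfAdjoint_iff hstar hw).1 he with rfl | rfl | rfl | rfl <;>
      simp [relNorm, hφ, map_star]
  calc φ x = φ (x - w * relTrace x) + φ w * φ (relTrace x) := by simp
    _ = x := by
      rw [fixed (sub_mul_relTrace_mem_selfAdjoint hw x), hφ, fixed (star_relTrace x),
        sub_add_cancel]

lemma exists_starRingEquiv_apply_eq [Finite K] (hstar : ∀ x : K, star x = x ^ 4) {w y : K}
    (hw : relTrace w = 1) (hy : relTrace y = 1) : ∃ φ : K ≃⋆+* K, φ w = y := by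
  have of_ringEquiv (φ : K ≃+* K) (hφ : φ w = y) : ∃ φ : K ≃⋆+* K, φ w = y :=
    ⟨starRingEquivOfStarEqPow hstar φ, hφ⟩
  have hstar_w := star_eq_add_one_of_relTrace_eq_one hw
  have he : y - w ∈ selfAdjoint K := by simpa [hy] using sub_mul_relTrace_mem_selfAdjoint hw y
  rcases (mem_selfAdjoint_iff hstar hw).1 he with h | h | h | h
  · exact of_ringEquiv (RingEquiv.refl K) (sub_eq_zero.1 h).symm
  · exact of_ringEquiv starRingAut (by
      rw [starRingAut_apply, hstar_w, ← h, add_sub_cancel])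
  · exact of_ringEquiv (frobeniusEquiv K 2) (by
      rw [relNorm, hstar_w] at h
      rw [frobeniusEquiv_apply, frobenius_def]
      linear_combination -h - w * CharTwo.two_eq_zero (R := K))
  · exact of_ringEquiv (starRingAut.trans (frobeniusEquiv K 2)) (by
      rw [relNorm, hstar_w] at h
      rw [RingEquiv.trans_apply, starRingAut_apply, hstar_w, frobeniusEquiv_apply, frobenius_def]
      linear_combination -h)

end FixedField

section Unital

variable {K : Type*} [Field K] [StarRing K]

variable (K) in
/-- The affine points `(x, y)` of the Hermitian unital, in the coordinates in which its equation is
`x x̄ = y + ȳ`. -/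
abbrev AffinePoint := {p : K × K // relNorm p.1 = relTrace p.2}

variable (K) in
/-- The Hermitian unital with equation `x x̄ = y z̄ + ȳ z`; `none` is its point at infinity
`[0 : 1 : 0]`. -/
abbrev Unital := Option (AffinePoint K)

/-- Homogeneous coordinates of a point of the unital. -/
def coords : Unital K → Fin 3 → K
  | none => ![0, 1, 0]
  | some p => ![p.1.1, p.1.2, 1]

/-- The points of the unital on the line `l 0 * x + l 1 * y + l 2 * z = 0`. -/
def lineSection (l : Fin 3 → K) : Set (Unital K) := {p | l ⬝ᵥ coords p = 0}

variable (K) in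
/-- The blocks of the unital: the sections by secant lines. -/
def unitalBlocks : Set (Set (Unital K)) := {b | b.Nontrivial ∧ ∃ l ≠ 0, b = lineSection l}

lemma none_mem_lineSection {l : Fin 3 → K} : none ∈ lineSection l ↔ l 1 = 0 := by
  simp [lineSection, coords, dotProduct, Fin.sum_univ_three]

lemma some_mem_lineSection {l : Fin 3 → K} {p : AffinePoint K} :
    some p ∈ lineSection l ↔ l 0 * p.1.1 + l 1 * p.1.2 + l 2 = 0 := by
  simp [lineSection, coords, dotProduct, Fin.sum_univ_three]

lemma mem_designAut_of_collineation [Finite K] {σ : Equiv.Perm (Unital K)}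
    (h : ∀ l : Fin 3 → K, l ≠ 0 → ∃ l' : Fin 3 → K, l' ≠ 0 ∧ σ ⁻¹' lineSection l = lineSection l') :
    σ ∈ designAut (unitalBlocks K) := by
  refine inv_mem_iff.1 (mem_designAut_of_finite ?_)
  rintro _ ⟨hb, l, hl, rfl⟩
  obtain ⟨l', hl', h'⟩ := h l hl
  refine ⟨hb.image σ⁻¹.injective, l', hl', ?_⟩
  rw [← h', Equiv.Perm.coe_inv, Equiv.image_symm_eq_preimage]

variable (K) in
/-- The affine point `(0, 0)`. -/
def AffinePoint.origin : AffinePoint K := ⟨0, by simp⟩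

lemma AffinePoint.snd_ne_zero {p : AffinePoint K} (hp : p ≠ AffinePoint.origin K) :
    p.1.2 ≠ 0 := fun h ↦ hp <| Subtype.ext <|
  Prod.ext (relNorm_eq_zero.1 (by rw [p.2, h, relTrace_zero])) h

open Classical in
/-- The map `(x, y) ↦ (x / y, y⁻¹)`, interchanging the origin with the point at infinity; in
homogeneous coordinates it swaps `y` and `z`. -/
def inversionFun : Unital K → Unital K
  | none => some (AffinePoint.origin K)
  | some p => if p = AffinePoint.origin K then none else
      some ⟨(p.1.1 / p.1.2, (p.1.2)⁻¹), by
        have hp := p.2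
        rcases eq_or_ne p.1.2 0 with hy | hy
        · simp [hy]
        · have hy' : star p.1.2 ≠ 0 := star_ne_zero.2 hy
          simp only [relNorm, relTrace, star_div₀, star_inv₀] at hp ⊢
          field_simp
          linear_combination hp⟩

lemma inversionFun_involutive : Function.Involutive (inversionFun (K := K)) := by
  rintro (_ | p)
  · simp [inversionFun]
  · by_cases hp : p = AffinePoint.origin K
    · simp [inversionFun, hp]
    · have hy : p.1.2 ≠ 0 := AffinePoint.snd_ne_zero hp
      simp [inversionFun, Subtype.ext_iff, Prod.ext_iff, AffinePoint.origin, hy]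

/-- `inversionFun` as a permutation of the unital. -/
def inversion : Equiv.Perm (Unital K) := inversionFun_involutive.toPerm

lemma inversion_mem_lineSection {l : Fin 3 → K} {p : Unital K} :
    inversion p ∈ lineSection l ↔ p ∈ lineSection ![l 0, l 2, l 1] := by
  rcases p with _ | p
  · simp [inversion, inversionFun, none_mem_lineSection, some_mem_lineSection, AffinePoint.origin]
  · by_cases hp : p = AffinePoint.origin K
    · simp [inversion, inversionFun, none_mem_lineSection, some_mem_lineSection, hp,
        AffinePoint.origin]
    · have hy : p.1.2 ≠ 0 := AffinePoint.snd_ne_zero hp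
      have : l 0 * (p.1.1 / p.1.2) + l 1 * p.1.2⁻¹ + l 2 =
          (l 0 * p.1.1 + l 2 * p.1.2 + l 1) / p.1.2 := by
        field_simp; ring
      simp [inversion, inversionFun, some_mem_lineSection, hp, hy, this]

lemma inversion_mem_designAut [Finite K] : inversion ∈ designAut (unitalBlocks K) := by
  refine mem_designAut_of_collineation fun l hl ↦ ⟨![l 0, l 2, l 1], ?_, ?_⟩
  · contrapose hl
    ext i
    have := congr_fun hl
    fin_cases i
    exacts [this 0, this 2, this 1]
  · ext p
    exact inversion_mem_lineSection

variable [Finite K]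

/-- The affine map `(x, y) ↦ (λ φ(x) + a, λ λ̄ φ(y) + ā λ φ(x) + b)` of the unital. -/
def affineSimilarity (c : Kˣ) (φ : K ≃⋆+* K) (t : AffinePoint K) : Equiv.Perm (AffinePoint K) :=
  Equiv.ofBijective
    (fun p ↦ ⟨(c * φ p.1.1 + t.1.1,
        relNorm (c : K) * φ p.1.2 + star t.1.1 * (c * φ p.1.1) + t.1.2), by
      have hp := congr_arg φ p.2
      have ht := t.2
      simp only [relNorm, relTrace, map_mul, map_add, map_star, star_add, star_mul', star_star]
        at hp ht ⊢
      linear_combination c * star (c : K) * hp + ht⟩)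
    (Finite.injective_iff_bijective.1 fun p q h ↦ by
      simp only [Subtype.mk.injEq, Prod.mk.injEq, add_left_inj] at h
      obtain ⟨hx, hy⟩ := h
      rw [hx, add_left_inj] at hy
      have hc : relNorm (c : K) ≠ 0 := relNorm_eq_zero.not.2 c.ne_zero
      exact Subtype.ext (Prod.ext (φ.injective (mul_left_cancel₀ c.ne_zero hx))
        (φ.injective (mul_left_cancel₀ hc hy))))

lemma optionCongr_affineSimilarity_mem_lineSection (c : Kˣ) (φ : K ≃⋆+* K) (t : AffinePoint K)
    {l : Fin 3 → K} {p : Unital K} :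
    Equiv.optionCongr (affineSimilarity c φ t) p ∈ lineSection l ↔ p ∈ lineSection
      ![φ.symm (c * (l 0 + l 1 * star t.1.1)), φ.symm (l 1 * relNorm (c : K)),
        φ.symm (l 0 * t.1.1 + l 1 * t.1.2 + l 2)] := by
  rcases p with _ | p
  · simp [none_mem_lineSection, relNorm_eq_zero]
  · have : l 0 * (c * φ p.1.1 + t.1.1) +
        l 1 * (relNorm (c : K) * φ p.1.2 + star t.1.1 * (c * φ p.1.1) + t.1.2) + l 2 =
        φ (φ.symm (c * (l 0 + l 1 * star t.1.1)) * p.1.1 +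
          φ.symm (l 1 * relNorm (c : K)) * p.1.2 + φ.symm (l 0 * t.1.1 + l 1 * t.1.2 + l 2)) := by
      simp only [map_add, map_mul, StarRingEquiv.apply_symm_apply]
      ring
    rw [Equiv.optionCongr_apply, Option.map_some, some_mem_lineSection, some_mem_lineSection,
      affineSimilarity, Equiv.ofBijective_apply, this, map_eq_zero_iff φ φ.injective]
    rfl

lemma optionCongr_affineSimilarity_mem_designAut (c : Kˣ) (φ : K ≃⋆+* K) (t : AffinePoint K) :
    Equiv.optionCongr (affineSimilarity c φ t) ∈ designAut (unitalBlocks K) := by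
  refine mem_designAut_of_collineation fun l hl ↦ ⟨_, ?_, Set.ext fun p ↦
    optionCongr_affineSimilarity_mem_lineSection c φ t⟩
  contrapose! hl
  have h1 : l 1 = 0 := by
    simpa [relNorm_eq_zero] using congr_fun hl 1
  have h0 : l 0 = 0 := by
    simpa [h1] using congr_fun hl 0
  have h2 : l 2 = 0 := by
    simpa [h0, h1] using congr_fun hl 2
  ext i
  fin_cases i
  exacts [h0, h1, h2]

end Unital

section Shadow

variable {K : Type*} [Field K] [StarRing K]

/-- The non-vertical line `y = m x + c`, as a section of the unital. -/
def slopeSection (m c : K) : Set (Unital K) := lineSection ![m, -1, c]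

lemma none_notMem_slopeSection (m c : K) : none ∉ slopeSection m c := by
  simp [slopeSection, none_mem_lineSection]

lemma some_mem_slopeSection {m c : K} {p : AffinePoint K} :
    some p ∈ slopeSection m c ↔ p.1.2 = m * p.1.1 + c := by
  simp only [slopeSection, some_mem_lineSection, Matrix.cons_val_zero, Matrix.cons_val_one,
    Matrix.cons_val]
  grind

lemma exists_slopeSection_of_fst_ne {p q : AffinePoint K} (h : p.1.1 ≠ q.1.1) :
    ∃ m c, some p ∈ slopeSection m c ∧ some q ∈ slopeSection m c := by
  refine ⟨(q.1.2 - p.1.2) / (q.1.1 - p.1.1),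
    p.1.2 - (q.1.2 - p.1.2) / (q.1.1 - p.1.1) * p.1.1, ?_, ?_⟩
  · rw [some_mem_slopeSection]; ring
  · have := sub_ne_zero.2 h.symm
    rw [some_mem_slopeSection]; field_simp; ring

lemma slopeSection_mem_unitalBlocks {m c : K} :
    slopeSection m c ∈ unitalBlocks K ↔ (slopeSection m c).Nontrivial := by
  refine ⟨fun h ↦ h.1, fun h ↦ ⟨h, _, fun h0 ↦ ?_, rfl⟩⟩
  simpa using congr_fun h0 1

lemma exists_eq_slopeSection {b : Set (Unital K)} (hb : b ∈ unitalBlocks K) (hnone : none ∉ b) :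
    ∃ m c, b = slopeSection m c := by
  obtain ⟨-, l, -, rfl⟩ := hb
  have hl : l 1 ≠ 0 := mt none_mem_lineSection.2 hnone
  refine ⟨-l 0 / l 1, -l 2 / l 1, ?_⟩
  ext p
  rcases p with _ | p
  · simp [hnone, none_notMem_slopeSection]
  · rw [some_mem_lineSection, some_mem_slopeSection]
    field_simp
    grind

/-- The abscissae of the affine points of a set of points of the unital. -/
def shadow (b : Set (Unital K)) : Set K := (fun p : AffinePoint K ↦ p.1.1) '' (some ⁻¹' b)

lemma shadow_slopeSection (m c : K) : shadow (slopeSection m c) =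
    {x | relNorm (x - star m) = relNorm m + relTrace c} := by
  have key (x : K) : relNorm (x - star m) = relNorm m + relTrace c ↔
      relNorm x = relTrace (m * x + c) := by
    rw [relNorm_sub, relNorm_star, star_star, relTrace_add, mul_comm m]
    grind
  ext x
  rw [Set.mem_ofPred_eq, key]
  constructor
  · rintro ⟨p, hp, rfl⟩
    rw [← some_mem_slopeSection.1 hp, p.2]
  · exact fun hx ↦ ⟨⟨(x, m * x + c), hx⟩, some_mem_slopeSection.2 rfl, rfl⟩

lemma injOn_fst_slopeSection (m c : K) :
    Set.InjOn (fun p : AffinePoint K ↦ p.1.1) (some ⁻¹' slopeSection m c) := fun p hp q hq h ↦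
  Subtype.ext <| Prod.ext h <| by
    rw [some_mem_slopeSection.1 hp, some_mem_slopeSection.1 hq, show p.1.1 = q.1.1 from h]

lemma nontrivial_shadow_slopeSection {m c : K} :
    (shadow (slopeSection m c)).Nontrivial ↔ (slopeSection m c).Nontrivial := by
  have himage : some '' (some ⁻¹' slopeSection m c) = slopeSection m c := by
    refine Set.image_preimage_eq_of_subset fun p hp ↦ ?_
    rcases p with _ | p
    · exact absurd hp (none_notMem_slopeSection m c)
    · exact ⟨p, rfl⟩
  rw [← himage]
  nth_rewrite 1 [himage]
  exact ⟨fun h ↦ (Set.nontrivial_of_image _ _ h).image (Option.some_injective _),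
    fun h ↦ (Set.nontrivial_of_image _ _ h).image_of_injOn (injOn_fst_slopeSection m c)⟩

lemma exists_shadow_slopeSection_eq_circle {m c : K} (h : (slopeSection m c).Nontrivial) :
    ∃ r ≠ star m, shadow (slopeSection m c) = circle (star m) r := by
  obtain ⟨r, hr, hrm⟩ := (nontrivial_shadow_slopeSection.2 h).exists_ne (star m)
  refine ⟨r, hrm, ?_⟩
  rw [shadow_slopeSection] at hr ⊢
  ext x
  rw [mem_circle, Set.mem_ofPred_eq, hr]

variable [CharP K 2]

lemma ne_star_of_relTrace_eq_one {w : K} (hw : relTrace w = 1) : w ≠ star w := fun h ↦ by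
  simp [relTrace_eq_zero_iff.2 h.symm] at hw

lemma circle_nontrivial {w a r : K} (hw : relTrace w = 1) (hr : r ≠ a) :
    (circle a r).Nontrivial := by
  have hw0 : star w ≠ 0 := fun h ↦ by simp [star_eq_zero.1 h] at hw
  refine ⟨r, mem_circle.2 rfl, a + (r - a) * (w / star w), ?_, fun h ↦ ?_⟩
  · rw [mem_circle, add_sub_cancel_left, relNorm_mul, mul_eq_left₀]
    · refine mul_right_cancel₀ (relNorm_eq_zero.not.2 hw0) ?_
      rw [← relNorm_mul, div_mul_cancel₀ _ hw0, relNorm_star, one_mul]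
    · exact relNorm_eq_zero.not.2 (sub_ne_zero.2 hr)
  · have : (r - a) * (w / star w) = r - a := by linear_combination -h
    rw [mul_eq_left₀ (sub_ne_zero.2 hr), div_eq_one_iff_eq hw0] at this
    exact ne_star_of_relTrace_eq_one hw this

lemma exists_shadow_eq_circle {w a r : K} (hw : relTrace w = 1) (hr : r ≠ a) :
    ∃ b ∈ unitalBlocks K, none ∉ b ∧ shadow b = circle a r := by
  have hshadow : shadow (slopeSection (star a) (w * (relNorm (r - a) - relNorm a))) =
      circle a r := by
    rw [shadow_slopeSection]
    ext x
    rw [mem_circle, Set.mem_ofPred_eq, star_star, relNorm_star, mul_comm,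
      relTrace_mul_of_star_eq (by simp), hw, mul_one, add_sub_cancel]
  refine ⟨_, slopeSection_mem_unitalBlocks.2 (nontrivial_shadow_slopeSection.1 ?_),
    none_notMem_slopeSection _ _, hshadow⟩
  exact hshadow ▸ circle_nontrivial hw hr

lemma slope_eq_of_shadow_eq {w m c n d : K} (hw : relTrace w = 1)
    (hm : (slopeSection m c).Nontrivial) (hn : (slopeSection n d).Nontrivial)
    (h : shadow (slopeSection m c) = shadow (slopeSection n d)) : m = n := by
  obtain ⟨r, hr, hr'⟩ := exists_shadow_slopeSection_eq_circle hm
  obtain ⟨s, hs, hs'⟩ := exists_shadow_slopeSection_eq_circle hn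
  exact star_injective (circle_center_injective hw hr hs (hr' ▸ hs' ▸ h))

end Shadow

section Stabilizer

variable {K : Type*} [Field K] [StarRing K]

/-- The points of the unital on the line joining `(x, 0)` to the point at infinity. -/
def verticalSection (x : K) : Set (Unital K) := insert none (some '' {p | p.1.1 = x})

lemma some_mem_verticalSection {x : K} {p : AffinePoint K} :
    some p ∈ verticalSection x ↔ p.1.1 = x := by
  simp [verticalSection]

lemma verticalSection_mem_unitalBlocks (p : AffinePoint K) :
    verticalSection p.1.1 ∈ unitalBlocks K := by
  refine ⟨⟨none, .inl rfl, some p, some_mem_verticalSection.2 rfl, (Option.some_ne_none p).symm⟩,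
    ![1, 0, -p.1.1], fun h ↦ by simpa using congr_fun h 0, ?_⟩
  ext q
  rcases q with _ | q
  · simp [verticalSection, none_mem_lineSection]
  · simp [some_mem_verticalSection, some_mem_lineSection, add_neg_eq_zero]

lemma exists_eq_verticalSection {b : Set (Unital K)} (hb : b ∈ unitalBlocks K) (hnone : none ∈ b) :
    ∃ x, b = verticalSection x := by
  obtain ⟨hb, l, hl, rfl⟩ := hb
  have hl1 : l 1 = 0 := none_mem_lineSection.1 hnone
  obtain ⟨_ | p, hp, hpnone⟩ := hb.exists_ne none
  · exact absurd rfl hpnone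
  rw [some_mem_lineSection] at hp
  have hl0 : l 0 ≠ 0 := fun hl0 ↦ hl <| by
    ext i
    fin_cases i
    · exact hl0
    · exact hl1
    · simpa [hl0, hl1] using hp
  refine ⟨p.1.1, ?_⟩
  ext q
  rcases q with _ | q
  · simpa [verticalSection] using hnone
  · have : l 0 * q.1.1 + l 1 * q.1.2 + l 2 = l 0 * (q.1.1 - p.1.1) := by
      linear_combination hp + (q.1.2 - p.1.2) * hl1
    simp [some_mem_lineSection, some_mem_verticalSection, this, hl0, sub_eq_zero]

lemma fst_eq_iff_exists_block {p q : AffinePoint K} :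
    p.1.1 = q.1.1 ↔ ∃ b ∈ unitalBlocks K, none ∈ b ∧ some p ∈ b ∧ some q ∈ b := by
  constructor
  · intro h
    exact ⟨_, verticalSection_mem_unitalBlocks p, .inl rfl, some_mem_verticalSection.2 rfl,
      some_mem_verticalSection.2 h.symm⟩
  · rintro ⟨b, hb, hnone, hp, hq⟩
    obtain ⟨x, rfl⟩ := exists_eq_verticalSection hb hnone
    rw [some_mem_verticalSection] at hp hq
    rw [hp, hq]

lemma fst_surjective {w : K} (hw : relTrace w = 1) :
    Function.Surjective fun p : AffinePoint K ↦ p.1.1 := fun x ↦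
  ⟨⟨(x, relNorm x * w), by rw [relTrace_mul_of_star_eq (star_relNorm x), hw, mul_one]⟩, rfl⟩

lemma exists_abscissa_perm {w : K} (hw : relTrace w = 1) {τ : Equiv.Perm (AffinePoint K)}
    (hτ : Equiv.optionCongr τ ∈ designAut (unitalBlocks K)) :
    ∃ π : Equiv.Perm K, ∀ p, (τ p).1.1 = π p.1.1 := by
  refine exists_perm_of_fiberwise (fst_surjective hw) fun p q ↦ ?_
  have mem_image {b : Set (Unital K)} (x : Unital K) :
      Equiv.optionCongr τ x ∈ Equiv.optionCongr τ '' b ↔ x ∈ b :=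
    (Equiv.injective _).mem_set_image
  simp only [fst_eq_iff_exists_block]
  constructor
  · rintro ⟨b, hb, hnone, hp, hq⟩
    obtain ⟨b, rfl⟩ := (Equiv.surjective (Equiv.optionCongr τ)).image_surjective b
    exact ⟨b, (hτ b).1 hb, (mem_image none).1 hnone, (mem_image (some p)).1 hp,
      (mem_image (some q)).1 hq⟩
  · rintro ⟨b, hb, hnone, hp, hq⟩
    exact ⟨_, (hτ b).2 hb, (mem_image none).2 hnone, (mem_image (some p)).2 hp,
      (mem_image (some q)).2 hq⟩

lemma shadow_image {τ : Equiv.Perm (AffinePoint K)} {π : Equiv.Perm K}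
    (hπ : ∀ p, (τ p).1.1 = π p.1.1) (b : Set (Unital K)) :
    shadow (Equiv.optionCongr τ '' b) = π '' shadow b := by
  have hb : some ⁻¹' (Equiv.optionCongr τ '' b) = τ '' (some ⁻¹' b) := by
    ext p
    obtain ⟨p, rfl⟩ := τ.surjective p
    rw [τ.injective.mem_set_image, Set.mem_preimage, Set.mem_preimage]
    exact (Equiv.optionCongr τ).injective.mem_set_image (a := some p)
  rw [shadow, hb, shadow, Set.image_image, Set.image_image]
  exact Set.image_congr fun p _ ↦ hπ p

variable [CharP K 2]

lemma mem_designAut_circles [Finite K] {w : K} (hw : relTrace w = 1)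
    {τ : Equiv.Perm (AffinePoint K)} (hτ : Equiv.optionCongr τ ∈ designAut (unitalBlocks K))
    {π : Equiv.Perm K} (hπ : ∀ p, (τ p).1.1 = π p.1.1) : π ∈ designAut (circles K) := by
  refine mem_designAut_of_finite ?_
  rintro _ ⟨a, r, hr, rfl⟩
  obtain ⟨b, hb, hnone, hbr⟩ := exists_shadow_eq_circle hw hr
  have hτb := (hτ b).2 hb
  obtain ⟨m, c, hmc⟩ := exists_eq_slopeSection hτb (mt none_mem_optionCongr_image.1 hnone)
  rw [← hbr, ← shadow_image hπ, hmc]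
  obtain ⟨s, hs, h⟩ := exists_shadow_slopeSection_eq_circle (hmc ▸ hτb).1
  exact h ▸ circle_mem_circles hs

-- The block joining `p` and `q` and its image have the same shadow, hence the same slope.
lemma apply_eq_self_of_fst_ne {w : K} (hw : relTrace w = 1) {τ : Equiv.Perm (AffinePoint K)}
    (hτ : Equiv.optionCongr τ ∈ designAut (unitalBlocks K)) (hfst : ∀ p, (τ p).1.1 = p.1.1)
    {p q : AffinePoint K} (hp : τ p = p) (h : p.1.1 ≠ q.1.1) : τ q = q := by
  obtain ⟨m, c, hpm, hqm⟩ := exists_slopeSection_of_fst_ne h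
  have hne : (slopeSection m c).Nontrivial :=
    ⟨_, hpm, _, hqm, fun hpq ↦ h (by rw [Option.some_injective _ hpq])⟩
  have hb := (hτ _).2 (slopeSection_mem_unitalBlocks.2 hne)
  obtain ⟨n, d, hnd⟩ := exists_eq_slopeSection hb
    (mt none_mem_optionCongr_image.1 (none_notMem_slopeSection m c))
  have hshadow : shadow (slopeSection m c) = shadow (slopeSection n d) := by
    rw [← hnd, shadow_image (π := 1) hfst, Equiv.Perm.coe_one, Set.image_id]
  obtain rfl := slope_eq_of_shadow_eq hw hne (hnd ▸ hb).1 hshadow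
  have image_mem {x : AffinePoint K} (hx : some x ∈ slopeSection m c) :
      some (τ x) ∈ slopeSection m d := hnd ▸ Set.mem_image_of_mem _ hx
  have hp' := some_mem_slopeSection.1 (image_mem hpm)
  have hq' := some_mem_slopeSection.1 (image_mem hqm)
  rw [some_mem_slopeSection] at hpm hqm
  rw [hp] at hp'
  refine Subtype.ext (Prod.ext (hfst q) ?_)
  rw [hfst] at hq'
  linear_combination hq' - hqm - hp' + hpm

/-- The affine point `(1, w)`. -/
def unitPoint {w : K} (hw : relTrace w = 1) : AffinePoint K := ⟨(1, w), by rw [hw, relNorm_one]⟩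

lemma eq_one_of_fst_eq {w : K} (hw : relTrace w = 1) {τ : Equiv.Perm (AffinePoint K)}
    (hτ : Equiv.optionCongr τ ∈ designAut (unitalBlocks K)) (hfst : ∀ p, (τ p).1.1 = p.1.1)
    (hO : τ (AffinePoint.origin K) = AffinePoint.origin K) : τ = 1 := by
  have of_fst_ne_zero {q : AffinePoint K} (hq : q.1.1 ≠ 0) : τ q = q :=
    apply_eq_self_of_fst_ne hw hτ hfst hO hq.symm
  ext1 q
  by_cases hq : q.1.1 = 0
  · refine apply_eq_self_of_fst_ne hw hτ hfst (of_fst_ne_zero (q := unitPoint hw) ?_) ?_ <;>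
      simp [unitPoint, hq]
  · exact of_fst_ne_zero hq

lemma eq_one_of_fixes_frame [Finite K] (hstar : ∀ x : K, star x = x ^ 4) {w : K}
    (hw : relTrace w = 1) {τ : Equiv.Perm (AffinePoint K)}
    (hτ : Equiv.optionCongr τ ∈ designAut (unitalBlocks K))
    (hO : τ (AffinePoint.origin K) = AffinePoint.origin K)
    (hP : τ (unitPoint hw) = unitPoint hw) : τ = 1 := by
  obtain ⟨π, hπ⟩ := exists_abscissa_perm hw hτ
  obtain ⟨φ, hφ⟩ := exists_starRingEquiv_of_equidistant hstar hw
    (preservesEquidistance_of_mem_designAut hw (mem_designAut_circles hw hτ hπ))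
    (by have := hπ (AffinePoint.origin K); rw [hO] at this; exact this.symm)
    (by have := hπ (unitPoint hw); rw [hP] at this; exact this.symm)
  set ρ := affineSimilarity 1 φ (AffinePoint.origin K) with hρ
  have hρ_apply (p : AffinePoint K) : (ρ p).1 = (φ p.1.1, φ p.1.2) := by
    simp [hρ, affineSimilarity, AffinePoint.origin]
  have hmem : Equiv.optionCongr (ρ⁻¹ * τ) ∈ designAut (unitalBlocks K) := by
    have : Equiv.optionCongr (ρ⁻¹ * τ) = (Equiv.optionCongr ρ)⁻¹ * Equiv.optionCongr τ := by
      ext1 p; rcases p <;> rfl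
    rw [this]
    exact mul_mem (inv_mem (optionCongr_affineSimilarity_mem_designAut _ _ _)) hτ
  have hτρ : τ = ρ := by
    rw [eq_comm, ← inv_mul_eq_one]
    refine eq_one_of_fst_eq hw hmem (fun p ↦ EquivLike.injective φ ?_) ?_
    · calc φ ((ρ⁻¹ * τ) p).1.1 = (ρ (ρ⁻¹ (τ p))).1.1 := by rw [hρ_apply, Equiv.Perm.mul_apply]
        _ = φ p.1.1 := by rw [Equiv.Perm.coe_inv, Equiv.apply_symm_apply, hπ, hφ]
    · rw [Equiv.Perm.mul_apply, hO, Equiv.Perm.inv_eq_iff_eq]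
      exact Subtype.ext (by simp [hρ_apply, AffinePoint.origin, Prod.ext_iff])
  have hφw : φ w = w := by
    simpa [hτρ, hρ_apply, unitPoint] using congr_arg (fun p : AffinePoint K ↦ p.1.2) hP
  ext1 p
  refine Subtype.ext ?_
  rw [hτρ, hρ_apply, starRingEquiv_apply_eq_self hstar hw hφw,
    starRingEquiv_apply_eq_self hstar hw hφw, Equiv.Perm.one_apply]

/-- The affine points above `x` are the `(x, w x x̄ + e)` with `e` self-adjoint. -/
def affinePointEquiv {w : K} (hw : relTrace w = 1) : AffinePoint K ≃ K × selfAdjoint K where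
  toFun p := (p.1.1, ⟨p.1.2 - w * relNorm p.1.1, p.2 ▸ sub_mul_relTrace_mem_selfAdjoint hw p.1.2⟩)
  invFun q := ⟨(q.1, w * relNorm q.1 + q.2), by
    rw [relTrace_add, mul_comm w, relTrace_mul_of_star_eq (star_relNorm _), hw, mul_one,
      relTrace_eq_zero_iff.2 q.2.2, add_zero]⟩
  left_inv p := by simp
  right_inv q := by simp

lemma ncard_setOf_fst_mem (hstar : ∀ x : K, star x = x ^ 4) {w : K} (hw : relTrace w = 1)
    (S : Set K) : {p : AffinePoint K | p.1.1 ∈ S}.ncard = S.ncard * 4 := by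
  have h : affinePointEquiv hw '' {p : AffinePoint K | p.1.1 ∈ S} = S ×ˢ Set.univ := by
    ext q
    rw [Equiv.image_eq_preimage_symm]
    simp [affinePointEquiv]
  rw [← Set.ncard_image_of_injective _ (affinePointEquiv hw).injective, h, Set.ncard_prod,
    Set.ncard_univ, card_selfAdjoint hstar hw]

end Stabilizer

section Order

variable {K : Type*} [Field K] [StarRing K]

variable (K) in
/-- The stabilizer of the point at infinity in the automorphism group of the unital. -/
def stabilizerNone : Subgroup (Equiv.Perm (Unital K)) :=
  designAut (unitalBlocks K) ⊓ MulAction.stabilizer _ (none : Unital K)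

lemma exists_eq_optionCongr_of_mem_stabilizerNone {σ : Equiv.Perm (Unital K)}
    (hσ : σ ∈ stabilizerNone K) : ∃ τ, Equiv.optionCongr τ = σ ∧
      Equiv.optionCongr τ ∈ designAut (unitalBlocks K) := by
  obtain ⟨τ, rfl⟩ := exists_eq_optionCongr hσ.2
  exact ⟨τ, rfl, hσ.1⟩

variable [Finite K]

lemma orbit_none : MulAction.orbit (designAut (unitalBlocks K)) (none : Unital K) = Set.univ := by
  refine Set.eq_univ_of_forall fun p ↦ ?_
  rcases p with _ | t
  · exact MulAction.mem_orbit_self _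
  · exact ⟨⟨_, mul_mem (optionCongr_affineSimilarity_mem_designAut 1 .refl t)
      inversion_mem_designAut⟩, by
        simp [Subgroup.smul_def, inversion, inversionFun, affineSimilarity, AffinePoint.origin]⟩

lemma optionCongr_affineSimilarity_mem_stabilizerNone (c : Kˣ) (φ : K ≃⋆+* K) (t : AffinePoint K) :
    Equiv.optionCongr (affineSimilarity c φ t) ∈ stabilizerNone K :=
  ⟨optionCongr_affineSimilarity_mem_designAut c φ t, rfl⟩

lemma orbit_origin : MulAction.orbit (stabilizerNone K) (some (AffinePoint.origin K)) =
    Set.range some := by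
  ext p
  constructor
  · rintro ⟨⟨σ, hσ⟩, rfl⟩
    obtain ⟨τ, rfl, -⟩ := exists_eq_optionCongr_of_mem_stabilizerNone hσ
    exact ⟨_, rfl⟩
  · rintro ⟨t, rfl⟩
    exact ⟨⟨_, optionCongr_affineSimilarity_mem_stabilizerNone 1 .refl t⟩, by
      simp [Subgroup.smul_def, affineSimilarity, AffinePoint.origin]⟩

variable (K) in
/-- The stabilizer of the point at infinity and the origin. -/
def stabilizerNoneOrigin : Subgroup (Equiv.Perm (Unital K)) :=
  stabilizerNone K ⊓ MulAction.stabilizer _ (some (AffinePoint.origin K))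

variable [CharP K 2]

lemma orbit_unitPoint (hstar : ∀ x : K, star x = x ^ 4) {w : K} (hw : relTrace w = 1) :
    MulAction.orbit (stabilizerNoneOrigin K) (some (unitPoint hw)) =
      some '' {p : AffinePoint K | p.1.1 ≠ 0} := by
  ext q
  constructor
  · rintro ⟨⟨σ, hσ, hσO⟩, rfl⟩
    obtain ⟨τ, rfl, hτ⟩ := exists_eq_optionCongr_of_mem_stabilizerNone hσ
    obtain ⟨π, hπ⟩ := exists_abscissa_perm hw hτ
    have hπ0 : π 0 = 0 := by
      have h := hπ (AffinePoint.origin K)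
      rw [Option.some_injective _ hσO] at h
      exact h.symm
    refine ⟨τ (unitPoint hw), ?_, rfl⟩
    rw [Set.mem_ofPred_eq, hπ, ← hπ0, π.injective.ne_iff]
    exact one_ne_zero
  · rintro ⟨q, hq, rfl⟩
    have hN : relNorm q.1.1 ≠ 0 := relNorm_eq_zero.not.2 hq
    obtain ⟨φ, hφ⟩ := exists_starRingEquiv_apply_eq hstar hw
      (y := (relNorm q.1.1)⁻¹ * q.1.2) (by
        rw [relTrace_mul_of_star_eq (by simp), ← q.2, inv_mul_cancel₀ hN])
    refine ⟨⟨Equiv.optionCongr (affineSimilarity (Units.mk0 _ hq) φ (AffinePoint.origin K)),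
      optionCongr_affineSimilarity_mem_stabilizerNone _ _ _, ?_⟩, ?_⟩
    · simp [affineSimilarity, AffinePoint.origin, MulAction.mem_stabilizer_iff]
    · refine congr_arg some (Subtype.ext (Prod.ext ?_ ?_))
      · simp [affineSimilarity, unitPoint, AffinePoint.origin]
      · simp [affineSimilarity, unitPoint, AffinePoint.origin, hφ, mul_inv_cancel_left₀ hN]

lemma stabilizer_frame (hstar : ∀ x : K, star x = x ^ 4) {w : K} (hw : relTrace w = 1) :
    stabilizerNoneOrigin K ⊓ MulAction.stabilizer _ (some (unitPoint hw)) = ⊥ := by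
  refine (Subgroup.eq_bot_iff_forall _).2 fun σ ⟨⟨hσ, hO⟩, hP⟩ ↦ ?_
  obtain ⟨τ, rfl, hτ⟩ := exists_eq_optionCongr_of_mem_stabilizerNone hσ
  rw [eq_one_of_fixes_frame hstar hw hτ (Option.some_injective _ hO)
    (Option.some_injective _ hP)]
  exact Equiv.optionCongr_refl

lemma ncard_of_mem_unitalBlocks (hstar : ∀ x : K, star x = x ^ 4) {w : K} (hw : relTrace w = 1)
    {b : Set (Unital K)} (hb : b ∈ unitalBlocks K) : b.ncard = 5 := by
  have of_none_mem {b : Set (Unital K)} (hb : b ∈ unitalBlocks K) (hnone : none ∈ b) :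
      b.ncard = 5 := by
    obtain ⟨x, rfl⟩ := exists_eq_verticalSection hb hnone
    have := ncard_setOf_fst_mem hstar hw {x}
    simp only [Set.mem_singleton_iff, Set.ncard_singleton] at this
    rw [verticalSection, Set.ncard_insert_of_notMem (by simp),
      Set.ncard_image_of_injective _ (Option.some_injective _), this]
  obtain ⟨p, hp⟩ := hb.1.nonempty
  obtain ⟨⟨σ, hσ⟩, rfl⟩ : p ∈ MulAction.orbit (designAut (unitalBlocks K)) none :=
    by
    rw [orbit_none]; exact Set.mem_univ p
  rw [← Set.ncard_image_of_injective b σ⁻¹.injective]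
  exact of_none_mem ((inv_mem hσ b).2 hb) ⟨_, hp, σ.symm_apply_apply none⟩

theorem card_designAut_unitalBlocks (hK : Nat.card K = 16) (hstar : ∀ x : K, star x = x ^ 4)
    {w : K} (hw : relTrace w = 1) : Nat.card (designAut (unitalBlocks K)) = 249600 := by
  have hAffine : Nat.card (AffinePoint K) = 64 := by
    simpa [hK] using ncard_setOf_fst_mem hstar hw Set.univ
  have hUnital : (Set.univ : Set (Unital K)).ncard = 65 := by
    rw [Set.ncard_univ, Finite.card_option, hAffine]
  have hRange : (Set.range (some : AffinePoint K → Unital K)).ncard = 64 := by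
    rw [← Set.image_univ, Set.ncard_image_of_injective _ (Option.some_injective _),
      Set.ncard_univ, hAffine]
  have hNonzero : (some '' {p : AffinePoint K | p.1.1 ≠ 0} : Set (Unital K)).ncard = 60 := by
    rw [Set.ncard_image_of_injective _ (Option.some_injective _)]
    have := ncard_setOf_fst_mem hstar hw {0}ᶜ
    rwa [Set.ncard_compl, Set.ncard_singleton, hK] at this
  calc Nat.card (designAut (unitalBlocks K))
      = 65 * Nat.card (stabilizerNone K) := by
        rw [card_eq_ncard_orbit_mul_card_inf_stabilizer _ (none : Unital K), orbit_none,
          hUnital]; rfl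
    _ = 65 * (64 * Nat.card (stabilizerNoneOrigin K)) := by
        rw [card_eq_ncard_orbit_mul_card_inf_stabilizer _ (some (AffinePoint.origin K)),
          orbit_origin, hRange]; rfl
    _ = 65 * (64 * (60 * 1)) := by
        rw [card_eq_ncard_orbit_mul_card_inf_stabilizer _ (some (unitPoint hw)),
          orbit_unitPoint hstar hw, hNonzero, stabilizer_frame hstar hw, Subgroup.card_bot]
    _ = 249600 := by norm_num

end Order

section Hyperplanes

variable {F : Type*} [Field F]

lemma finrank_eq_iff_exists_dotProduct {n : ℕ} {W : Submodule F (Fin (n + 1) → F)} :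
    Module.finrank F W = n ↔ ∃ l ≠ 0, ∀ v, v ∈ W ↔ l ⬝ᵥ v = 0 := by
  have finrank_ker {f : Module.Dual F (Fin (n + 1) → F)} (hf : f ≠ 0) :
      Module.finrank F (LinearMap.ker f) = n := by
    simpa using Module.Dual.finrank_ker_add_one_of_ne_zero hf
  constructor
  · intro hW
    have hlt : W < ⊤ := lt_top_iff_ne_top.2 fun h ↦ by
      rw [h, finrank_top, Module.finrank_fin_fun] at hW
      exact n.succ_ne_self hW
    obtain ⟨f, hf, hWf⟩ := Submodule.exists_le_ker_of_lt_top W hlt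
    obtain ⟨l, rfl⟩ := (dotProductEquiv F (Fin (n + 1))).surjective f
    obtain rfl := Submodule.eq_of_le_of_finrank_eq hWf (hW.trans (finrank_ker hf).symm)
    exact ⟨l, (LinearEquiv.map_ne_zero_iff _).1 hf, fun v ↦ Iff.rfl⟩
  · rintro ⟨l, hl, h⟩
    have hW : W = LinearMap.ker (dotProductEquiv F (Fin (n + 1)) l) := Submodule.ext h
    rw [hW, finrank_ker ((LinearEquiv.map_ne_zero_iff _).2 hl)]

end Hyperplanes

section Diagonalization

variable {K : Type*} [Field K] [StarRing K]

lemma coords_ne_zero (p : Unital K) : coords p ≠ 0 := by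
  rcases p with _ | p
  · exact fun h ↦ by simpa [coords] using congr_fun h 1
  · exact fun h ↦ by simpa [coords] using congr_fun h 2

lemma eq_of_coords_eq_smul {c : K} {p q : Unital K} (h : c • coords q = coords p) : p = q := by
  rcases p with _ | p <;> rcases q with _ | q
  · rfl
  · have hc : c = 0 := by simpa [coords] using congr_fun h 2
    simpa [hc, coords] using congr_fun h 1
  · simpa [coords] using congr_fun h 2
  · have hc : c = 1 := by simpa [coords] using congr_fun h 2
    have h0 : q.1.1 = p.1.1 := by simpa [hc, coords] using congr_fun h 0
    have h1 : q.1.2 = p.1.2 := by simpa [hc, coords] using congr_fun h 1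
    rw [Subtype.ext (Prod.ext h0 h1)]

lemma exists_finrank_eq_two_iff_exists_lineSection {b : Set (Unital K)} :
    (∃ W : Submodule K (Fin 3 → K), Module.finrank K W = 2 ∧ b = {p | coords p ∈ W}) ↔
      ∃ l ≠ 0, b = lineSection l := by
  constructor
  · rintro ⟨W, hW, rfl⟩
    obtain ⟨l, hl, h⟩ := finrank_eq_iff_exists_dotProduct.1 hW
    exact ⟨l, hl, Set.ext fun p ↦ h _⟩
  · rintro ⟨l, hl, rfl⟩
    exact ⟨LinearMap.ker (dotProductEquiv K (Fin 3) l),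
      finrank_eq_iff_exists_dotProduct.2 ⟨l, hl, fun v ↦ Iff.rfl⟩, rfl⟩

variable [CharP K 2]

lemma relNorm_add_relTrace_coords (p : Unital K) :
    relNorm (coords p 0) + relTrace (coords p 1 * star (coords p 2)) = 0 := by
  rcases p with _ | p
  · simp [coords]
  · simp [coords, p.2, CharTwo.add_self_eq_zero]

lemma exists_smul_eq_coords {v : Fin 3 → K} (hv : v ≠ 0)
    (h : relNorm (v 0) + relTrace (v 1 * star (v 2)) = 0) :
    ∃ p : Unital K, ∃ c : K, c • v = coords p := by
  by_cases h2 : v 2 = 0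
  · have h0 : v 0 = 0 := by simpa [h2, relNorm_eq_zero] using h
    have h1 : v 1 ≠ 0 := fun h1 ↦ hv <| by
      ext i
      fin_cases i
      exacts [h0, h1, h2]
    refine ⟨none, (v 1)⁻¹, ?_⟩
    ext i
    fin_cases i <;> simp [coords, h0, h1, h2]
  · have hmem : relNorm (v 0 / v 2) = relTrace (v 1 / v 2) := by
      have h2' : star (v 2) ≠ 0 := star_ne_zero.2 h2
      simp only [relNorm, relTrace, star_div₀, star_mul', star_star] at h ⊢
      field_simp
      linear_combination h - (v 1 * star (v 2) + star (v 1) * v 2) * CharTwo.two_eq_zero (R := K)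
    refine ⟨some ⟨(v 0 / v 2, v 1 / v 2), hmem⟩, (v 2)⁻¹, ?_⟩
    ext i
    fin_cases i <;> simp [coords, h2, div_eq_inv_mul]

/-- The coordinate change `(x, y, z) ↦ (y + w z, y + (w + 1) z, x)`, which turns the sum of the
three norms into the form `x x̄ + y z̄ + ȳ z` defining the unital. -/
def diagonalization (w : K) : (Fin 3 → K) ≃ₗ[K] Fin 3 → K where
  toFun v := ![v 1 + w * v 2, v 1 + (w + 1) * v 2, v 0]
  invFun v := ![v 2, (w + 1) * v 0 + w * v 1, v 0 + v 1]
  map_add' u v := by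
    ext i
    fin_cases i <;> dsimp <;> ring
  map_smul' c v := by
    ext i
    fin_cases i <;> dsimp <;> ring
  left_inv v := by
    ext i
    fin_cases i <;> simp <;> grind
  right_inv v := by
    ext i
    fin_cases i <;> simp <;> grind

lemma sum_relNorm_diagonalization {w : K} (hw : relTrace w = 1) (v : Fin 3 → K) :
    ∑ i, relNorm (diagonalization w v i) = relNorm (v 0) + relTrace (v 1 * star (v 2)) := by
  have hstar := star_eq_add_one_of_relTrace_eq_one hw
  have apply_eq : diagonalization w v = ![v 1 + w * v 2, v 1 + (w + 1) * v 2, v 0] := rfl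
  simp only [apply_eq, Fin.sum_univ_three, Matrix.cons_val, relNorm, relTrace, star_add,
    star_mul', star_star, star_one, hstar]
  grind

end Diagonalization

section PG216

lemma card_K16 : Nat.card K16 = 16 := GaloisField.card 2 4 (by norm_num)

/-- The involution `x ↦ x ^ 4` of `GF(16)`, whose fixed field is `GF(4)`. -/
instance starRingK16 : StarRing K16 where
  star x := x ^ 4
  star_involutive x := by
    have := Fintype.ofFinite K16
    change (x ^ 4) ^ 4 = x
    rw [← pow_mul]
    nth_rewrite 2 [← FiniteField.pow_card x]
    rw [Fintype.card_eq_nat_card, card_K16]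
  star_mul x y := by ring
  star_add x y := add_pow_char_pow (p := 2) (n := 2) x y

lemma star_K16 (x : K16) : star x = x ^ 4 := rfl

lemma exists_relTrace_eq_one : ∃ w : K16, relTrace w = 1 := by
  obtain ⟨x, hx⟩ : ∃ x : K16, relTrace x ≠ 0 := by
    by_contra! h
    have := Fintype.ofFinite K16
    have hdvd := (FiniteField.forall_pow_eq_one_iff K16 3).1 fun x ↦ by
      have := relTrace_eq_zero_iff.1 (h x)
      rw [star_K16] at this
      exact Units.ext (mul_left_cancel₀ x.ne_zero (by push_cast; linear_combination this))
    rw [Fintype.card_eq_nat_card, card_K16] at hdvd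
    norm_num at hdvd
  refine ⟨(relTrace x)⁻¹ * x, ?_⟩
  rw [relTrace_mul_of_star_eq (by simp), inv_mul_cancel₀ hx]

lemma mk_mem_HermitianSet {v : V16} (hv : v ≠ 0) :
    Projectivization.mk K16 v hv ∈ HermitianSet ↔ ∑ i, relNorm (v i) = 0 := by
  obtain ⟨a, ha⟩ := Projectivization.exists_smul_eq_mk_rep K16 v hv
  have hmem : Projectivization.mk K16 v hv ∈ HermitianSet ↔
      ∑ i, relNorm ((a : K16) * v i) = 0 := by
    simp only [HermitianSet, Set.mem_ofPred_eq, ← ha, relNorm_eq_pow_five star_K16,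
      Fin.sum_univ_three]
    rfl
  simp only [hmem, relNorm_mul, ← Finset.mul_sum]
  exact mul_eq_zero_iff_left (relNorm_eq_zero.not.2 a.ne_zero)

variable {w : K16}

/-- The point of the Hermitian set corresponding to a point of the unital. -/
def toHermitianSet (hw : relTrace w = 1) (p : Unital K16) : HermitianSet :=
  ⟨.mk K16 (diagonalization w (coords p))
      ((LinearEquiv.map_ne_zero_iff _).2 (coords_ne_zero p)), by
    rw [mk_mem_HermitianSet, sum_relNorm_diagonalization hw, relNorm_add_relTrace_coords]⟩

lemma toHermitianSet_bijective (hw : relTrace w = 1) :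
    Function.Bijective (toHermitianSet hw) := by
  constructor
  · intro p q h
    obtain ⟨a, ha⟩ := (Projectivization.mk_eq_mk_iff' ..).1 (congr_arg Subtype.val h)
    rw [← map_smul] at ha
    exact eq_of_coords_eq_smul ((diagonalization w).injective ha)
  · rintro ⟨x, hx⟩
    induction x using Projectivization.ind with
    | h u hu =>
      obtain ⟨v, rfl⟩ := (diagonalization w).surjective u
      rw [mk_mem_HermitianSet, sum_relNorm_diagonalization hw] at hx
      obtain ⟨p, c, hc⟩ := exists_smul_eq_coords ((LinearEquiv.map_ne_zero_iff _).1 hu) hx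
      refine ⟨p, Subtype.ext ((Projectivization.mk_eq_mk_iff' ..).2 ⟨c, ?_⟩)⟩
      rw [← hc, map_smul]

lemma toHermitianSet_submodule_le_iff (hw : relTrace w = 1) {p : Unital K16}
    {W : Submodule K16 V16} : (toHermitianSet hw p).1.submodule ≤ W ↔
      coords p ∈ W.comap (diagonalization w).toLinearMap := by
  rw [toHermitianSet, Projectivization.submodule_mk, Submodule.span_singleton_le_iff_mem]
  rfl

lemma mem_unitalBlocks_iff_ncard {b : Set (Unital K16)} (hw : relTrace w = 1) :
    b ∈ unitalBlocks K16 ↔ b.ncard = 5 ∧ ∃ l ≠ 0, b = lineSection l := by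
  refine ⟨fun hb ↦ ⟨ncard_of_mem_unitalBlocks star_K16 hw hb, hb.2⟩, fun ⟨hb, h⟩ ↦ ⟨?_, h⟩⟩
  rw [← Set.one_lt_ncard_iff_nontrivial, hb]
  norm_num

lemma toHermitianSet_image_mem_hermitianBlocks (hw : relTrace w = 1) {b : Set (Unital K16)} :
    toHermitianSet hw '' b ∈ hermitianBlocks ↔ b ∈ unitalBlocks K16 := by
  have hbij := toHermitianSet_bijective hw
  have image_eq_iff {W : Submodule K16 V16} :
      toHermitianSet hw '' b = {x | x.1.submodule ≤ W} ↔
        b = {p | coords p ∈ W.comap (diagonalization w).toLinearMap} := by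
    rw [← (Set.preimage_injective.2 hbij.2).eq_iff, Set.preimage_image_eq _ hbij.1]
    simp only [Set.preimage_ofPred_eq, toHermitianSet_submodule_le_iff]
  rw [mem_unitalBlocks_iff_ncard hw, ← exists_finrank_eq_two_iff_exists_lineSection]
  constructor
  · rintro ⟨W, hW, hb, hb5⟩
    rw [Set.ncard_image_of_injective _ hbij.1] at hb5
    refine ⟨hb5, W.comap (diagonalization w).toLinearMap, ?_, image_eq_iff.1 hb⟩
    rw [Submodule.comap_equiv_eq_map_symm, LinearEquiv.finrank_map_eq, hW]
  · rintro ⟨hb5, W, hW, hb⟩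
    refine ⟨W.map (diagonalization w).toLinearMap, ?_, image_eq_iff.2 ?_, ?_⟩
    · rw [LinearEquiv.finrank_map_eq, hW]
    · rwa [Submodule.comap_map_eq_of_injective (diagonalization w).injective]
    · rwa [Set.ncard_image_of_injective _ hbij.1]

end PG216

/-- The automorphism group of the Hermitian unital design of order 4 (the permutations
of the 65 points of the Hermitian set mapping every block to a block) has order
exactly 249600. -/
theorem hermitian_unital_design_aut_card :
    Nat.card {σ : Equiv.Perm ↥HermitianSet // ∀ b ∈ hermitianBlocks, ⇑σ '' b ∈ hermitianBlocks}
      = 249600 := by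
  obtain ⟨w, hw⟩ := exists_relTrace_eq_one
  let e : Unital K16 ≃ HermitianSet := .ofBijective _ (toHermitianSet_bijective hw)
  have : Finite HermitianSet := .of_equiv _ e
  calc Nat.card {σ : Equiv.Perm HermitianSet // ∀ b ∈ hermitianBlocks, σ '' b ∈ hermitianBlocks}
      = Nat.card (designAut hermitianBlocks) := card_forall_image_mem
    _ = Nat.card (designAut (unitalBlocks K16)) :=
        (card_designAut_congr e fun _ ↦ toHermitianSet_image_mem_hermitianBlocks hw).symm
    _ = 249600 := card_designAut_unitalBlocks card_K16 star_K16 hw
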